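/- arXiv:2009.01946 — 2 statements merged into one kernel-verified Lean document; each statement's English description precedes it below -/
import Mathlib

section
/- Let A, B, C be a nondegenerate triangle in the Euclidean plane with side lengths a = dist B C, b = dist C A, c = dist A B. Let M₁ = midpoint(B,C), M₂ = midpoint(C,A), M₃ = midpoint(A,B), let G be the centroid, O the circumcenter, H the orthocenter, I the incenter (barycentric weights (a, b, c)), Mi the mittenpunkt (barycentric weights (a(b+c−a), b(c+a−b), c(a+b−c))), and Sy the symmedian point (barycentric weights (a², b², c²)). Then there exists a nonzero real polynomial in two variables of total degree at most 3 vanishing at all twelve points: A, B, C, M₁, M₂, M₃, Sy, G, O, Mi, I, H. -/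
open EuclideanGeometry RealInnerProductSpace

/-- The barycentric combination of three points with weights `u, v, w`. -/
noncomputable def bary (P Q R : EuclideanSpace ℝ (Fin 2)) (u v w : ℝ) :
    EuclideanSpace ℝ (Fin 2) :=
  (u / (u + v + w)) • P + (v / (u + v + w)) • Q + (w / (u + v + w)) • R

/-- Evaluation of a two-variable real polynomial at a point of the plane. -/
noncomputable def mvEval (f : MvPolynomial (Fin 2) ℝ)
    (p : EuclideanSpace ℝ (Fin 2)) : ℝ :=
  MvPolynomial.eval (fun i => p i) f

/-!
The Thomson cubic is the locus of the points that are collinear with the centroid and their own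
isogonal conjugate. In barycentric coordinates with respect to the triangle, isogonal conjugation
is `(x : y : z) ↦ (a² y z : b² z x : c² x y)` and the centroid is `(1 : 1 : 1)`, so this locus is
the zero set of a cubic form; barycentric coordinates being affine functions on the plane, it is cut
out by a polynomial of degree at most three. For the vertices and the centroid the condition is
degenerate and the form vanishes. As for the other points, the incenter is its own conjugate, the
symmedian point is conjugate to the centroid, a midpoint of a side is conjugate to the opposite
vertex, the circumcenter and the orthocenter are conjugate and lie on the Euler line, and the
mittenpunkt is collinear with its conjugate and the centroid.
-/

section AffinePolynomial

open MvPolynomial Module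

variable {R M ι : Type*} [CommRing R] [AddCommGroup M] [Module R M] [Fintype ι] [DecidableEq ι]

/-- The polynomial in the coordinates of a basis that represents an affine function. -/
noncomputable def affinePolynomial (b : Basis ι R M) (f : M →ᵃ[R] R) : MvPolynomial ι R :=
  f.linear.toMvPolynomial b (Basis.singleton Unit R) () + C (f 0)

theorem eval_affinePolynomial (b : Basis ι R M) (f : M →ᵃ[R] R) (x : M) :
    eval (b.repr x) (affinePolynomial b f) = f x := by
  rw [affinePolynomial, map_add, LinearMap.toMvPolynomial_eval_eq_apply, eval_C,
    LinearEquiv.symm_apply_apply, Basis.singleton_repr, f.decomp', Pi.sub_apply]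
  simp

theorem totalDegree_affinePolynomial_le (b : Basis ι R M) (f : M →ᵃ[R] R) :
    (affinePolynomial b f).totalDegree ≤ 1 :=
  (totalDegree_add _ _).trans
    (max_le (LinearMap.toMvPolynomial_totalDegree_le _ _ _ _) (by simp))

end AffinePolynomial

section IsocubicForm

variable {R : Type*} [CommRing R]

/-- The cubic form, in barycentric coordinates `(x : y : z)`, of the pivotal isocubic whose pivot is
the centroid and whose pole is `(p : q : r)`. It is the determinant with rows `(1, 1, 1)`,
`(x, y, z)` and `(p y z, q z x, r x y)`; the Thomson cubic is the case of the pole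
`(a² : b² : c²)`. -/
def isocubicForm (p q r x y z : R) : R :=
  x * (r * y ^ 2 - q * z ^ 2) + y * (p * z ^ 2 - r * x ^ 2) + z * (q * x ^ 2 - p * y ^ 2)

theorem map_isocubicForm {S : Type*} [CommRing S] (φ : R →+* S) (p q r x y z : R) :
    φ (isocubicForm p q r x y z) = isocubicForm (φ p) (φ q) (φ r) (φ x) (φ y) (φ z) := by
  simp only [isocubicForm, map_add, map_sub, map_mul, map_pow]

theorem isocubicForm_div {K : Type*} [Field K] (p q r x y z s : K) :
    isocubicForm p q r (x / s) (y / s) (z / s) = isocubicForm p q r x y z / s ^ 3 := by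
  unfold isocubicForm
  ring

theorem isocubicForm_zero_left (p q r y z : R) :
    isocubicForm p q r 0 y z = p * y * z * (z - y) := by
  unfold isocubicForm
  ring

theorem isocubicForm_eq_zero_of_collinear {p q r x y z : R} (α β : R)
    (hx : p * (y * z) = α + β * x) (hy : q * (z * x) = α + β * y)
    (hz : r * (x * y) = α + β * z) : isocubicForm p q r x y z = 0 := by
  unfold isocubicForm
  linear_combination (z - y) * hx + (x - z) * hy + (y - x) * hz

theorem isocubicForm_anticomplement_eq_zero {p q r x y z : R} (k : R)
    (hx : p * ((z + x - y) * (x + y - z)) = k * x) (hy : q * ((x + y - z) * (y + z - x)) = k * y)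
    (hz : r * ((y + z - x) * (z + x - y)) = k * z) :
    isocubicForm p q r (y + z - x) (z + x - y) (x + y - z) = 0 := by
  unfold isocubicForm
  linear_combination 2 * ((y - z) * hx + (z - x) * hy + (x - y) * hz)

theorem isocubicForm_centroid (p q r : R) : isocubicForm p q r 1 1 1 = 0 := by
  unfold isocubicForm
  ring

theorem isocubicForm_symmedian (p q r : R) : isocubicForm p q r p q r = 0 :=
  isocubicForm_eq_zero_of_collinear (p * q * r) 0 (by ring) (by ring) (by ring)

theorem isocubicForm_incenter (a b c : R) :
    isocubicForm (a ^ 2) (b ^ 2) (c ^ 2) a b c = 0 :=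
  isocubicForm_eq_zero_of_collinear 0 (a * b * c) (by ring) (by ring) (by ring)

theorem isocubicForm_mittenpunkt (a b c : R) :
    isocubicForm (a ^ 2) (b ^ 2) (c ^ 2)
      (a * (b + c - a)) (b * (c + a - b)) (c * (a + b - c)) = 0 :=
  isocubicForm_eq_zero_of_collinear (4 * (a * b * c) ^ 2) (-(a * b * c * (a + b + c)))
    (by ring) (by ring) (by ring)

/-- The first barycentric weight of the circumcenter in terms of the side lengths; the other two
arise by cyclic permutation. -/
def circumWeight (a b c : R) : R :=
  a ^ 2 * (b ^ 2 + c ^ 2 - a ^ 2)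

theorem isocubicForm_circumcenter (a b c : R) :
    isocubicForm (a ^ 2) (b ^ 2) (c ^ 2)
      (circumWeight a b c) (circumWeight b c a) (circumWeight c a b) = 0 :=
  isocubicForm_eq_zero_of_collinear
    ((a * b * c) ^ 2 * (circumWeight a b c + circumWeight b c a + circumWeight c a b))
    (-2 * (a * b * c) ^ 2)
    (by unfold circumWeight; ring) (by unfold circumWeight; ring) (by unfold circumWeight; ring)

theorem isocubicForm_orthocenter (a b c : R) :
    isocubicForm (a ^ 2) (b ^ 2) (c ^ 2)
      (circumWeight b c a + circumWeight c a b - circumWeight a b c)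
      (circumWeight c a b + circumWeight a b c - circumWeight b c a)
      (circumWeight a b c + circumWeight b c a - circumWeight c a b) = 0 :=
  isocubicForm_anticomplement_eq_zero
    ((b ^ 2 + c ^ 2 - a ^ 2) * (c ^ 2 + a ^ 2 - b ^ 2) * (a ^ 2 + b ^ 2 - c ^ 2))
    (by unfold circumWeight; ring) (by unfold circumWeight; ring) (by unfold circumWeight; ring)

theorem circumWeight_sum (a b c : R) :
    circumWeight a b c + circumWeight b c a + circumWeight c a b =
      (a + b + c) * (b + c - a) * (c + a - b) * (a + b - c) := by
  unfold circumWeight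
  ring

end IsocubicForm

section IsocubicDegree

open MvPolynomial

variable {R σ : Type*} [CommRing R] {x y z : MvPolynomial σ R}

theorem totalDegree_mul_sub_sq_le (p q : R) (hx : x.totalDegree ≤ 1) (hy : y.totalDegree ≤ 1)
    (hz : z.totalDegree ≤ 1) : (x * (C p * y ^ 2 - C q * z ^ 2)).totalDegree ≤ 3 := by
  have sq_le (t : R) {f : MvPolynomial σ R} (hf : f.totalDegree ≤ 1) :
      (C t * f ^ 2).totalDegree ≤ 2 := by
    rw [C_mul']
    exact (totalDegree_smul_le t _).trans ((totalDegree_pow f 2).trans (by lia))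
  calc (x * (C p * y ^ 2 - C q * z ^ 2)).totalDegree
      ≤ x.totalDegree + (C p * y ^ 2 - C q * z ^ 2).totalDegree := totalDegree_mul _ _
    _ ≤ 1 + 2 := add_le_add hx <|
        (totalDegree_sub _ _).trans (max_le (sq_le p hy) (sq_le q hz))

theorem totalDegree_isocubicForm_le (p q r : R) (hx : x.totalDegree ≤ 1) (hy : y.totalDegree ≤ 1)
    (hz : z.totalDegree ≤ 1) : (isocubicForm (C p) (C q) (C r) x y z).totalDegree ≤ 3 :=
  (totalDegree_add _ _).trans <| max_le
    ((totalDegree_add _ _).trans <| max_le (totalDegree_mul_sub_sq_le r q hx hy hz)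
      (totalDegree_mul_sub_sq_le p r hy hz hx))
    (totalDegree_mul_sub_sq_le q p hz hx hy)

end IsocubicDegree

section Bary

variable (A B C : EuclideanSpace ℝ (Fin 2))

theorem bary_rotate (u v w : ℝ) : bary A B C u v w = bary B C A v w u := by
  rw [bary, bary, add_rotate, add_rotate u]

theorem add_sub_two_smul_bary {u v w : ℝ} (h : u + v + w ≠ 0) :
    A + B + C - (2 : ℝ) • bary A B C u v w =
      bary A B C (v + w - u) (w + u - v) (u + v - w) := by
  have hs : v + w - u + (w + u - v) + (u + v - w) = u + v + w := by ring
  rw [bary, bary, hs]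
  match_scalars <;> field_simp <;> ring

theorem dist_bary_left_sq {u v w : ℝ} (h : u + v + w ≠ 0) :
    dist (bary A B C u v w) A ^ 2 =
      (v ^ 2 * dist A B ^ 2 + w ^ 2 * dist C A ^ 2 +
        v * w * (dist A B ^ 2 + dist C A ^ 2 - dist B C ^ 2)) / (u + v + w) ^ 2 := by
  simp only [EuclideanSpace.dist_sq_eq, Real.dist_eq, sq_abs, Fin.sum_univ_two, bary,
    PiLp.add_apply, PiLp.smul_apply, smul_eq_mul]
  field_simp
  ring

theorem coord_bary (T : AffineBasis (Fin 3) ℝ (EuclideanSpace ℝ (Fin 2))) {u v w : ℝ}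
    (h : u + v + w ≠ 0) (i : Fin 3) :
    T.coord i (bary (T 0) (T 1) (T 2) u v w) = ![u, v, w] i / (u + v + w) := by
  have hsum : ∑ j, ![u, v, w] j / (u + v + w) = 1 := by
    simp [Fin.sum_univ_three, ← add_div, h]
  have hbary : bary (T 0) (T 1) (T 2) u v w =
      Finset.univ.affineCombination ℝ T (fun j ↦ ![u, v, w] j / (u + v + w)) := by
    rw [Finset.affineCombination_eq_linear_combination _ _ _ hsum]
    simp [Fin.sum_univ_three, bary]
  rw [hbary, T.coord_apply_combination_of_mem (Finset.mem_univ i) hsum]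

end Bary

theorem eq_of_forall_dist_eq {V P : Type*} [NormedAddCommGroup V] [InnerProductSpace ℝ V]
    [MetricSpace P] [NormedAddTorsor V P] {n : ℕ} (T : AffineBasis (Fin (n + 1)) ℝ P) {x y : P}
    {r s : ℝ} (hx : ∀ i, dist (T i) x = r) (hy : ∀ i, dist (T i) y = s) : x = y := by
  let S : Affine.Simplex ℝ P n := ⟨T, T.ind⟩
  have mem_span (z : P) : z ∈ affineSpan ℝ (Set.range S.points) :=
    T.tot ▸ AffineSubspace.mem_top ℝ V z
  rw [S.eq_circumcenter_of_dist_eq (mem_span x) hx, S.eq_circumcenter_of_dist_eq (mem_span y) hy]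

theorem dist_lt_dist_add_dist_of_affineIndependent {ι V P : Type*} [NormedAddCommGroup V]
    [NormedSpace ℝ V] [StrictConvexSpace ℝ V] [MetricSpace P] [NormedAddTorsor V P] {p : ι → P}
    (hp : AffineIndependent ℝ p) (i j k : ι) (h : Function.Injective ![i, j, k]) :
    dist (p i) (p k) < dist (p i) (p j) + dist (p j) (p k) :=
  dist_lt_dist_add_dist_iff.2 (hp.not_wbtw_of_injective i j k h)

section Triangle

variable {A B C : EuclideanSpace ℝ (Fin 2)} {a b c : ℝ}

/-- A nondegenerate triangle as an affine basis of the plane. -/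
def triangleBasis (h : AffineIndependent ℝ ![A, B, C]) :
    AffineBasis (Fin 3) ℝ (EuclideanSpace ℝ (Fin 2)) where
  toFun := ![A, B, C]
  ind' := h
  tot' := by
    rw [h.affineSpan_eq_top_iff_card_eq_finrank_add_one]
    simp

theorem dist_bary_circumWeight_left_sq (ha : a = dist B C) (hb : b = dist C A) (hc : c = dist A B)
    (hs : circumWeight a b c + circumWeight b c a + circumWeight c a b ≠ 0) :
    dist (bary A B C (circumWeight a b c) (circumWeight b c a) (circumWeight c a b)) A ^ 2 =
      (a * b * c) ^ 2 / (circumWeight a b c + circumWeight b c a + circumWeight c a b) := by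
  rw [dist_bary_left_sq A B C hs, ← ha, ← hb, ← hc, div_eq_div_iff (pow_ne_zero 2 hs) hs]
  unfold circumWeight
  ring

theorem eq_bary_circumWeight_of_dist_eq {O : EuclideanSpace ℝ (Fin 2)}
    (hABC : AffineIndependent ℝ ![A, B, C])
    (ha : a = dist B C) (hb : b = dist C A) (hc : c = dist A B)
    (hs : circumWeight a b c + circumWeight b c a + circumWeight c a b ≠ 0)
    (hB : dist O A = dist O B) (hC : dist O A = dist O C) :
    O = bary A B C (circumWeight a b c) (circumWeight b c a) (circumWeight c a b) := by
  set u := circumWeight a b c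
  set v := circumWeight b c a
  set w := circumWeight c a b
  have hQA : dist (bary A B C u v w) A ^ 2 = (a * b * c) ^ 2 / (u + v + w) :=
    dist_bary_circumWeight_left_sq ha hb hc hs
  have hQB : dist (bary A B C u v w) B ^ 2 = (a * b * c) ^ 2 / (u + v + w) := by
    rw [bary_rotate, add_rotate, mul_rotate]
    exact dist_bary_circumWeight_left_sq hb hc ha (add_rotate u v w ▸ hs)
  have hQC : dist (bary A B C u v w) C ^ 2 = (a * b * c) ^ 2 / (u + v + w) := by
    rw [← bary_rotate, ← add_rotate, ← mul_rotate]
    exact dist_bary_circumWeight_left_sq hc ha hb ((add_rotate w u v).symm ▸ hs)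
  refine eq_of_forall_dist_eq (triangleBasis hABC) (r := dist O A)
    (s := √((a * b * c) ^ 2 / (u + v + w))) (fun i ↦ ?_) (fun i ↦ ?_)
  · rw [dist_comm]
    fin_cases i
    exacts [rfl, hB.symm, hC.symm]
  · rw [dist_comm, ← Real.sqrt_sq dist_nonneg]
    congr 1
    fin_cases i
    exacts [hQA, hQB, hQC]

theorem sides_lt_add (hABC : AffineIndependent ℝ ![A, B, C])
    (ha : a = dist B C) (hb : b = dist C A) (hc : c = dist A B) :
    a < b + c ∧ b < c + a ∧ c < a + b := by
  have h₁ := dist_lt_dist_add_dist_of_affineIndependent hABC 1 0 2 (by decide)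
  have h₂ := dist_lt_dist_add_dist_of_affineIndependent hABC 0 1 2 (by decide)
  have h₃ := dist_lt_dist_add_dist_of_affineIndependent hABC 0 2 1 (by decide)
  simp only [Matrix.cons_val] at h₁ h₂ h₃
  grind [dist_comm]

theorem circumWeight_sum_pos (ha : a < b + c) (hb : b < c + a) (hc : c < a + b) :
    0 < circumWeight a b c + circumWeight b c a + circumWeight c a b := by
  rw [circumWeight_sum]
  have hs : 0 < a + b + c := by linarith
  exact mul_pos (mul_pos (mul_pos hs (sub_pos.2 ha)) (sub_pos.2 hb)) (sub_pos.2 hc)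

theorem mittenpunkt_weights_sum_pos (ha : a < b + c) (hb : b < c + a) (hc : c < a + b) :
    0 < a * (b + c - a) + b * (c + a - b) + c * (a + b - c) := by
  have ha₀ : 0 < a := by linarith
  have hb₀ : 0 < b := by linarith
  have hc₀ : 0 < c := by linarith
  exact add_pos (add_pos (mul_pos ha₀ (sub_pos.2 ha)) (mul_pos hb₀ (sub_pos.2 hb)))
    (mul_pos hc₀ (sub_pos.2 hc))

end Triangle

section Isocubic

open MvPolynomial

variable (T : AffineBasis (Fin 3) ℝ (EuclideanSpace ℝ (Fin 2)))

/-- The pivotal isocubic of `isocubicForm` for the triangle `T`, as a polynomial in the Cartesian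
coordinates of the plane. -/
noncomputable def isocubic (p q r : ℝ) : MvPolynomial (Fin 2) ℝ :=
  let coordPolynomial i := affinePolynomial (PiLp.basisFun 2 ℝ (Fin 2)) (T.coord i)
  isocubicForm (C p) (C q) (C r) (coordPolynomial 0) (coordPolynomial 1) (coordPolynomial 2)

theorem totalDegree_isocubic_le (p q r : ℝ) : (isocubic T p q r).totalDegree ≤ 3 :=
  totalDegree_isocubicForm_le p q r (totalDegree_affinePolynomial_le _ _)
    (totalDegree_affinePolynomial_le _ _) (totalDegree_affinePolynomial_le _ _)

theorem mvEval_isocubic (p q r : ℝ) (P : EuclideanSpace ℝ (Fin 2)) :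
    mvEval (isocubic T p q r) P =
      isocubicForm p q r (T.coord 0 P) (T.coord 1 P) (T.coord 2 P) := by
  have eval_coord (i : Fin 3) :
      eval (fun j ↦ P j) (affinePolynomial (PiLp.basisFun 2 ℝ (Fin 2)) (T.coord i)) =
        T.coord i P := eval_affinePolynomial (PiLp.basisFun 2 ℝ (Fin 2)) (T.coord i) P
  simp only [mvEval, isocubic, map_isocubicForm, eval_C, eval_coord]

theorem mvEval_isocubic_bary (p q r : ℝ) {u v w : ℝ} (h : u + v + w ≠ 0) :
    mvEval (isocubic T p q r) (bary (T 0) (T 1) (T 2) u v w) =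
      isocubicForm p q r u v w / (u + v + w) ^ 3 := by
  simp only [mvEval_isocubic, coord_bary T h, Matrix.cons_val, isocubicForm_div]

theorem isocubic_ne_zero {p : ℝ} (hp : p ≠ 0) (q r : ℝ) : isocubic T p q r ≠ 0 := by
  intro h
  have hQ := mvEval_isocubic_bary T p q r (u := 0) (v := 2) (w := -1) (by norm_num)
  norm_num [h, mvEval, isocubicForm_zero_left, hp] at hQ

theorem mvEval_isocubic_eq_zero {p q r u v w : ℝ} {P : EuclideanSpace ℝ (Fin 2)}
    (hP : P = bary (T 0) (T 1) (T 2) u v w) (h : u + v + w ≠ 0)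
    (hF : isocubicForm p q r u v w = 0) : mvEval (isocubic T p q r) P = 0 := by
  rw [hP, mvEval_isocubic_bary T p q r h, hF, zero_div]

theorem mvEval_isocubic_vertex (p q r : ℝ) (i : Fin 3) : mvEval (isocubic T p q r) (T i) = 0 := by
  rw [mvEval_isocubic]
  fin_cases i <;> simp [T.coord_apply, isocubicForm]

theorem mvEval_isocubic_midpoint (p q r : ℝ) (i j : Fin 3) :
    mvEval (isocubic T p q r) (midpoint ℝ (T i) (T j)) = 0 := by
  simp only [mvEval_isocubic, AffineMap.map_midpoint, T.coord_apply]
  fin_cases i <;> fin_cases j <;> simp [isocubicForm, midpoint_eq_smul_add]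

end Isocubic

theorem stmt4 (A B C O : EuclideanSpace ℝ (Fin 2))
    (hABC : AffineIndependent ℝ ![A, B, C])
    (a b c : ℝ) (ha : a = dist B C) (hb : b = dist C A) (hc : c = dist A B)
    (M₁ M₂ M₃ G H I Mi Sy : EuclideanSpace ℝ (Fin 2))
    (hM₁ : M₁ = midpoint ℝ B C) (hM₂ : M₂ = midpoint ℝ C A)
    (hM₃ : M₃ = midpoint ℝ A B)
    (hG : G = (1 / 3 : ℝ) • A + (1 / 3 : ℝ) • B + (1 / 3 : ℝ) • C)
    (hO : dist O A = dist O B ∧ dist O A = dist O C)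
    (hH : H = A + B + C - (2 : ℝ) • O)
    (hI : I = bary A B C a b c)
    (hMi : Mi = bary A B C (a * (b + c - a)) (b * (c + a - b)) (c * (a + b - c)))
    (hSy : Sy = bary A B C (a ^ 2) (b ^ 2) (c ^ 2)) :
    ∃ f : MvPolynomial (Fin 2) ℝ, f ≠ 0 ∧ f.totalDegree ≤ 3 ∧
      mvEval f A = 0 ∧ mvEval f B = 0 ∧ mvEval f C = 0 ∧
      mvEval f M₁ = 0 ∧ mvEval f M₂ = 0 ∧ mvEval f M₃ = 0 ∧
      mvEval f Sy = 0 ∧ mvEval f G = 0 ∧ mvEval f O = 0 ∧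
      mvEval f Mi = 0 ∧ mvEval f I = 0 ∧ mvEval f H = 0 := by
  obtain ⟨hA, hB, hC⟩ := sides_lt_add hABC ha hb hc
  obtain ⟨ha₀, hb₀, hc₀⟩ : 0 < a ∧ 0 < b ∧ 0 < c := by grind
  have hs := (circumWeight_sum_pos hA hB hC).ne'
  have hO' := eq_bary_circumWeight_of_dist_eq hABC ha hb hc hs hO.1 hO.2
  have hH' := hH.trans (hO' ▸ add_sub_two_smul_bary A B C hs)
  have hG' : G = bary A B C 1 1 1 := by rw [hG]; norm_num [bary]
  subst hM₁ hM₂ hM₃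
  let T := triangleBasis hABC
  exact ⟨isocubic T (a ^ 2) (b ^ 2) (c ^ 2), isocubic_ne_zero T (by positivity) _ _,
    totalDegree_isocubic_le T _ _ _,
    mvEval_isocubic_vertex T _ _ _ 0, mvEval_isocubic_vertex T _ _ _ 1,
    mvEval_isocubic_vertex T _ _ _ 2,
    mvEval_isocubic_midpoint T _ _ _ 1 2, mvEval_isocubic_midpoint T _ _ _ 2 0,
    mvEval_isocubic_midpoint T _ _ _ 0 1,
    mvEval_isocubic_eq_zero T hSy (by positivity) (isocubicForm_symmedian _ _ _),
    mvEval_isocubic_eq_zero T hG' (by norm_num) (isocubicForm_centroid _ _ _),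
    mvEval_isocubic_eq_zero T hO' hs (isocubicForm_circumcenter _ _ _),
    mvEval_isocubic_eq_zero T hMi (mittenpunkt_weights_sum_pos hA hB hC).ne'
      (isocubicForm_mittenpunkt _ _ _),
    mvEval_isocubic_eq_zero T hI (by positivity) (isocubicForm_incenter _ _ _),
    mvEval_isocubic_eq_zero T hH' (by contrapose! hs; linarith) (isocubicForm_orthocenter _ _ _)⟩
end

section
/- Let A, B, C be a nondegenerate triangle in the Euclidean plane with side lengths a = dist B C, b = dist C A, c = dist A B, mittenpunkt Mi (barycentric combination of A, B, C with weights (a(b+c−a), b(c+a−b), c(a+b−c))), and excenters I₁, I₂, I₃ (barycentric weights (−a, b, c), (a, −b, c), (a, b, −c)). Then the symmedian (Lemoine) point of the excentral triangle I₁I₂I₃ — the barycentric combination of I₁, I₂, I₃ with weights (dist(I₂,I₃)², dist(I₃,I₁)², dist(I₁,I₂)²) — equals Mi. -/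
open EuclideanGeometry RealInnerProductSpace

/-! Write `a, b, c` for the side lengths and `x = b + c - a`, `y = c + a - b`, `z = a + b - c`. With
`w = c • (C - A) - b • (B - A)`, which directs the external bisector at `A` and has squared length
`b * c * y * z`, one has `I₂ - A = y⁻¹ • w` and `I₃ - A = -z⁻¹ • w`. As `y + z = 2 * a`, this gives
`|I₂I₃|² = 4 * a² * b * c / (y * z)`, so up to the symmetric factor `4 * a * b * c / (x * y * z)`
the symmedian weights of the excentral triangle are `a * x, b * y, c * z`. These are the weights of
the mittenpunkt with respect to `A, B, C`, and they define the same point with respect to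
`I₁, I₂, I₃` because `x • I₁ = -a • A + b • B + c • C` and cyclically, while
`-a² + b * a + c * a = a * x`. -/

theorem affineIndependent_rotate {k V P : Type*} [Ring k] [AddCommGroup V] [Module k V]
    [AddTorsor V P] {A B C : P} (h : AffineIndependent k ![A, B, C]) :
    AffineIndependent k ![B, C, A] :=
  h.comm_left.comm_right

theorem centerMass_univ_three {k V : Type*} [Field k] [AddCommGroup V] [Module k V] (P Q R : V)
    (u v w : k) :
    Finset.univ.centerMass ![u, v, w] ![P, Q, R] = (u + v + w)⁻¹ • (u • P + v • Q + w • R) := by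
  simp [Finset.centerMass, Fin.sum_univ_three]

theorem norm_norm_smul_sub_norm_smul_sq {V : Type*} [SeminormedAddCommGroup V]
    [InnerProductSpace ℝ V] (u v : V) :
    ‖‖v‖ • u - ‖u‖ • v‖ ^ 2 = ‖u‖ * ‖v‖ * (‖u - v‖ ^ 2 - (‖u‖ - ‖v‖) ^ 2) := by
  rw [norm_sub_sq_real, norm_sub_sq_real, real_inner_smul_left, real_inner_smul_right, norm_smul,
    norm_smul, norm_norm, norm_norm]
  ring

/-- How much longer the path from `C` to `B` through `A` is than the segment `BC`: the quantity
`b + c - a` of the triangle `ABC`, which is the sum of the barycentric weights of the excenter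
opposite `A`. -/
noncomputable def detourExcess {X : Type*} [PseudoMetricSpace X] (A B C : X) : ℝ :=
  dist C A + dist A B - dist B C

theorem detourExcess_add_detourExcess {X : Type*} [PseudoMetricSpace X] (A B C : X) :
    detourExcess B C A + detourExcess C A B = 2 * dist B C := by
  simp only [detourExcess]
  ring

theorem detourExcess_pos {V P : Type*} [NormedAddCommGroup V] [NormedSpace ℝ V]
    [StrictConvexSpace ℝ V] [MetricSpace P] [NormedAddTorsor V P] {A B C : P}
    (h : AffineIndependent ℝ ![A, B, C]) : 0 < detourExcess A B C := by
  have hA : ¬ Wbtw ℝ C A B := h.not_wbtw_of_injective 2 0 1 (by decide)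
  rw [detourExcess, sub_pos, dist_comm B C]
  exact dist_lt_dist_add_dist_iff.2 hA

section NormedSpace

variable {V : Type*} [NormedAddCommGroup V] [NormedSpace ℝ V] {A B C : V}

/-- The excenter of the triangle `ABC` opposite its first vertex `A`, by its barycentric weights
`(-a, b, c)`. The other two excenters are obtained by permuting the vertices cyclically. -/
noncomputable def excenter (A B C : V) : V :=
  Finset.univ.centerMass ![-dist B C, dist C A, dist A B] ![A, B, C]

/-- The mittenpunkt of the triangle `ABC`, by its barycentric weights
`(a * (b + c - a), b * (c + a - b), c * (a + b - c))`. -/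
noncomputable def mittenpunkt (A B C : V) : V :=
  Finset.univ.centerMass
    ![dist B C * detourExcess A B C, dist C A * detourExcess B C A, dist A B * detourExcess C A B]
    ![A, B, C]

/-- The symmedian (Lemoine) point of the triangle `PQR`, by its barycentric weights, the squares of
the opposite side lengths. -/
noncomputable def symmedianPoint (P Q R : V) : V :=
  Finset.univ.centerMass ![dist Q R ^ 2, dist R P ^ 2, dist P Q ^ 2] ![P, Q, R]

theorem detourExcess_smul_excenter (hA : detourExcess A B C ≠ 0) :
    detourExcess A B C • excenter A B C = -dist B C • A + dist C A • B + dist A B • C := by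
  have hsum : -dist B C + dist C A + dist A B = detourExcess A B C := by
    rw [detourExcess]; ring
  rw [excenter, centerMass_univ_three, hsum, smul_inv_smul₀ hA]

theorem mittenpunkt_eq_centerMass_excenter (hA : detourExcess A B C ≠ 0)
    (hB : detourExcess B C A ≠ 0) (hC : detourExcess C A B ≠ 0) :
    mittenpunkt A B C = Finset.univ.centerMass
      ![dist B C * detourExcess A B C, dist C A * detourExcess B C A, dist A B * detourExcess C A B]
      ![excenter A B C, excenter B C A, excenter C A B] := by
  rw [mittenpunkt, centerMass_univ_three, centerMass_univ_three]
  congr 1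
  rw [mul_smul _ _ (excenter A B C), detourExcess_smul_excenter hA,
    mul_smul _ _ (excenter B C A), detourExcess_smul_excenter hB,
    mul_smul _ _ (excenter C A B), detourExcess_smul_excenter hC]
  simp only [detourExcess]
  module

theorem excenter_sub_excenter (hB : detourExcess B C A ≠ 0) (hC : detourExcess C A B ≠ 0) :
    excenter B C A - excenter C A B =
      (2 * dist B C / (detourExcess B C A * detourExcess C A B)) •
        (dist A B • (C - A) - dist C A • (B - A)) := by
  have hIB : excenter B C A - A =
      (detourExcess B C A)⁻¹ • (dist A B • (C - A) - dist C A • (B - A)) := by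
    rw [eq_inv_smul_iff₀ hB, smul_sub, detourExcess_smul_excenter hB, detourExcess]
    module
  have hIC : excenter C A B - A =
      -(detourExcess C A B)⁻¹ • (dist A B • (C - A) - dist C A • (B - A)) := by
    rw [neg_smul, ← smul_neg, eq_inv_smul_iff₀ hC, smul_sub, detourExcess_smul_excenter hC,
      detourExcess]
    module
  rw [← sub_sub_sub_cancel_right _ _ A, hIB, hIC, ← detourExcess_add_detourExcess A B C, ← sub_smul]
  congr 1
  field

end NormedSpace

section InnerProductSpace

variable {V : Type*} [NormedAddCommGroup V] [InnerProductSpace ℝ V] {A B C : V}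

theorem norm_externalBisector_sq (A B C : V) :
    ‖dist A B • (C - A) - dist C A • (B - A)‖ ^ 2 =
      dist C A * dist A B * (detourExcess B C A * detourExcess C A B) := by
  rw [dist_comm A B, dist_eq_norm B A, dist_eq_norm C A, norm_norm_smul_sub_norm_smul_sq,
    sub_sub_sub_cancel_right, ← dist_eq_norm C A, ← dist_eq_norm B A, ← dist_eq_norm C B,
    dist_comm C B, dist_comm B A, detourExcess, detourExcess]
  ring

theorem dist_excenter_excenter_sq (hB : detourExcess B C A ≠ 0) (hC : detourExcess C A B ≠ 0) :
    dist (excenter B C A) (excenter C A B) ^ 2 =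
      4 * dist B C ^ 2 * dist C A * dist A B / (detourExcess B C A * detourExcess C A B) := by
  rw [dist_eq_norm, excenter_sub_excenter hB hC, norm_smul, mul_pow, norm_externalBisector_sq,
    Real.norm_eq_abs, sq_abs]
  field

theorem sq_dist_excenter_eq_smul (hA : detourExcess A B C ≠ 0) (hB : detourExcess B C A ≠ 0)
    (hC : detourExcess C A B ≠ 0) :
    ![dist (excenter B C A) (excenter C A B) ^ 2, dist (excenter C A B) (excenter A B C) ^ 2,
        dist (excenter A B C) (excenter B C A) ^ 2] =
      (4 * dist B C * dist C A * dist A B /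
          (detourExcess A B C * detourExcess B C A * detourExcess C A B)) •
        ![dist B C * detourExcess A B C, dist C A * detourExcess B C A,
          dist A B * detourExcess C A B] := by
  rw [dist_excenter_excenter_sq hB hC, dist_excenter_excenter_sq hC hA,
    dist_excenter_excenter_sq hA hB]
  simp only [Matrix.smul_cons, smul_eq_mul, Matrix.smul_empty]
  congrm ![?_, ?_, ?_] <;> field

theorem stmt12_general (h : AffineIndependent ℝ ![A, B, C]) :
    symmedianPoint (excenter A B C) (excenter B C A) (excenter C A B) = mittenpunkt A B C := by
  have hBCA := affineIndependent_rotate h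
  have hCAB := affineIndependent_rotate hBCA
  have hA := (detourExcess_pos h).ne'
  have hB := (detourExcess_pos hBCA).ne'
  have hC := (detourExcess_pos hCAB).ne'
  have hr : 4 * dist B C * dist C A * dist A B /
      (detourExcess A B C * detourExcess B C A * detourExcess C A B) ≠ 0 := by
    have hAB : dist A B ≠ 0 := dist_ne_zero.2 (h.injective.ne (by decide : (0 : Fin 3) ≠ 1))
    have hBC : dist B C ≠ 0 := dist_ne_zero.2 (h.injective.ne (by decide : (1 : Fin 3) ≠ 2))
    have hCA : dist C A ≠ 0 := dist_ne_zero.2 (h.injective.ne (by decide : (2 : Fin 3) ≠ 0))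
    positivity
  rw [symmedianPoint, sq_dist_excenter_eq_smul hA hB hC, Finset.centerMass_smul_left (hc := hr),
    mittenpunkt_eq_centerMass_excenter hA hB hC]

end InnerProductSpace

theorem bary_eq_centerMass (P Q R : EuclideanSpace ℝ (Fin 2)) (u v w : ℝ) :
    bary P Q R u v w = Finset.univ.centerMass ![u, v, w] ![P, Q, R] := by
  rw [bary, centerMass_univ_three]
  module

theorem bary_rotate_s12 (P Q R : EuclideanSpace ℝ (Fin 2)) (u v w : ℝ) :
    bary P Q R u v w = bary Q R P v w u := by
  rw [bary, bary, ← add_rotate u v w]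
  module

theorem bary_eq_excenter_opposite_first (A B C : EuclideanSpace ℝ (Fin 2)) :
    bary A B C (-dist B C) (dist C A) (dist A B) = excenter A B C :=
  bary_eq_centerMass ..

theorem bary_eq_excenter_opposite_second (A B C : EuclideanSpace ℝ (Fin 2)) :
    bary A B C (dist B C) (-dist C A) (dist A B) = excenter B C A := by
  rw [bary_rotate_s12, bary_eq_centerMass, excenter]

theorem bary_eq_excenter_opposite_third (A B C : EuclideanSpace ℝ (Fin 2)) :
    bary A B C (dist B C) (dist C A) (-dist A B) = excenter C A B := by
  rw [← bary_rotate_s12, bary_eq_centerMass, excenter]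

theorem bary_eq_mittenpunkt (A B C : EuclideanSpace ℝ (Fin 2)) :
    bary A B C (dist B C * (dist C A + dist A B - dist B C))
      (dist C A * (dist A B + dist B C - dist C A))
      (dist A B * (dist B C + dist C A - dist A B)) = mittenpunkt A B C :=
  bary_eq_centerMass ..

theorem bary_eq_symmedianPoint (P Q R : EuclideanSpace ℝ (Fin 2)) :
    bary P Q R (dist Q R ^ 2) (dist R P ^ 2) (dist P Q ^ 2) = symmedianPoint P Q R :=
  bary_eq_centerMass ..

theorem stmt12 (A B C : EuclideanSpace ℝ (Fin 2))
    (hABC : AffineIndependent ℝ ![A, B, C])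
    (a b c : ℝ) (ha : a = dist B C) (hb : b = dist C A) (hc : c = dist A B)
    (I₁ I₂ I₃ Mi : EuclideanSpace ℝ (Fin 2))
    (hI₁ : I₁ = bary A B C (-a) b c)
    (hI₂ : I₂ = bary A B C a (-b) c)
    (hI₃ : I₃ = bary A B C a b (-c))
    (hMi : Mi = bary A B C (a * (b + c - a)) (b * (c + a - b)) (c * (a + b - c))) :
    bary I₁ I₂ I₃ (dist I₂ I₃ ^ 2) (dist I₃ I₁ ^ 2) (dist I₁ I₂ ^ 2) = Mi := by
  subst ha hb hc
  rw [hI₁, hI₂, hI₃, hMi, bary_eq_excenter_opposite_first, bary_eq_excenter_opposite_second,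
    bary_eq_excenter_opposite_third, bary_eq_mittenpunkt, bary_eq_symmedianPoint,
    stmt12_general hABC]
end
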